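/- arXiv:2005.13748 — 6 statements merged into one kernel-verified Lean document; each statement's English description precedes it below -/
import Mathlib

section
/- Let d ≥ 1, let γ ∈ (0, 1), let θ ∈ ℝ^d (with the Euclidean norm) satisfy ‖θ‖₂ = 1, let x ∈ ℝ^d satisfy ‖x‖₂ ≤ 1, and let y ∈ {−1, +1}. Then there exists a perturbation Δ ∈ ℝ^d with ‖Δ‖₂ ≤ γ, ‖x + Δ‖₂ ≤ 1, and y·⟨θ, x + Δ⟩ ≤ 0, if and only if y·⟨θ, x⟩ ≤ γ. -/
open scoped RealInnerProductSpace

/-- Proposition 1: for linear models with unit-norm parameter over the unit ball,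
the adversarially robust 0-1 loss with ℓ2 budget `γ` equals the margin indicator
`1{y ⟨θ, x⟩ ≤ γ}`. -/
theorem robust_loss_eq_margin_indicator
    (d : ℕ) (hd : 1 ≤ d) (γ : ℝ) (hγ : γ ∈ Set.Ioo (0:ℝ) 1)
    (θ x : EuclideanSpace ℝ (Fin d)) (hθ : ‖θ‖ = 1) (hx : ‖x‖ ≤ 1)
    (y : ℝ) (hy : y = 1 ∨ y = -1) :
    (∃ Δ : EuclideanSpace ℝ (Fin d),
        ‖Δ‖ ≤ γ ∧ ‖x + Δ‖ ≤ 1 ∧ y * ⟪θ, x + Δ⟫ ≤ 0) ↔ y * ⟪θ, x⟫ ≤ γ := by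
  have hyabs : |y| = 1 := by rcases hy with rfl | rfl <;> simp
  constructor
  · rintro ⟨Δ, hΔ, -, hle⟩
    have hbound : |y * ⟪θ, Δ⟫| ≤ ‖Δ‖ := by
      simpa [abs_mul, hyabs, hθ] using abs_real_inner_le_norm θ Δ
    rw [inner_add_right, mul_add] at hle
    linarith [neg_abs_le (y * ⟪θ, Δ⟫)]
  · intro h
    rcases le_or_gt (y * ⟪θ, x⟫) 0 with hneg | hpos
    · exact ⟨0, by simpa using hγ.1.le, by simpa using hx, by simpa using hneg⟩
    · -- Project `x` orthogonally onto the decision hyperplane.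
      refine ⟨-(⟪θ, x⟫ • θ), ?_, ?_, ?_⟩
      · have habs : |⟪θ, x⟫| = y * ⟪θ, x⟫ := by
          rw [← abs_of_pos hpos, abs_mul, hyabs, one_mul]
        rw [norm_neg, norm_smul, hθ, mul_one, Real.norm_eq_abs, habs]
        exact h
      · have hsq : ‖x + -(⟪θ, x⟫ • θ)‖ ^ 2 = ‖x‖ ^ 2 - ⟪θ, x⟫ ^ 2 := by
          rw [← sub_eq_add_neg, norm_sub_sq_real, inner_smul_right, real_inner_comm, norm_smul,
            hθ, mul_one, Real.norm_eq_abs, sq_abs]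
          ring
        refine le_trans (pow_le_pow_iff_left₀ (norm_nonneg _) (norm_nonneg x) two_ne_zero |>.1 ?_) hx
        linarith [sq_nonneg ⟪θ, x⟫]
      · rw [inner_add_right, inner_neg_right, inner_smul_right, real_inner_self_eq_norm_sq, hθ]
        simp
end

section
/- Let γ ∈ (0, 1), let φ : ℝ → ℝ be a margin-based loss with φ(α) ≥ 0 for all α, and let A ⊆ ℝ satisfy [−1, 1] ⊆ A. Fix η ∈ [0, 1] and ε > 0, and let S := {α ∈ A : ΔC_{φ_γ,A}(α, η) ≥ ε}. Then: (i) if ε > max{η, 1 − η}, then S = ∅; (ii) if |2η − 1| < ε ≤ max{η, 1 − η}, then S = {α ∈ A : |α| ≤ γ}, and hence inf_{α ∈ S} ΔC_{φ,A}(α, η) = inf_{α ∈ A, |α| ≤ γ} ΔC_{φ,A}(α, η); (iii) if ε ≤ |2η − 1|, then S = {α ∈ A : (2η − 1)α ≤ 0 or |α| ≤ γ}, and hence inf_{α ∈ S} ΔC_{φ,A}(α, η) = inf_{α ∈ A : (2η−1)α ≤ 0 or |α| ≤ γ} ΔC_{φ,A}(α, η). -/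
/-- Class-conditional risk of a margin-based loss `φ`:
`C_φ(α, η) = η φ(α) + (1 - η) φ(-α)`. -/
noncomputable def ccr (φ : ℝ → ℝ) (α η : ℝ) : ℝ := η * φ α + (1 - η) * φ (-α)

/-- Minimal class-conditional risk over a set `A` of achievable prediction values. -/
noncomputable def ccrStar (φ : ℝ → ℝ) (A : Set ℝ) (η : ℝ) : ℝ :=
  sInf ((fun α => ccr φ α η) '' A)

/-- Excess class-conditional risk. -/
noncomputable def ccrExcess (φ : ℝ → ℝ) (A : Set ℝ) (α η : ℝ) : ℝ :=
  ccr φ α η - ccrStar φ A η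

/-- `φ` is `(ψ, A)`-calibrated. -/
def Calibrated (φ ψ : ℝ → ℝ) (A : Set ℝ) : Prop :=
  ∀ ε > (0:ℝ), ∃ δ > (0:ℝ), ∀ η ∈ Set.Icc (0:ℝ) 1, ∀ α ∈ A,
    ccr φ α η < ccrStar φ A η + δ → ccr ψ α η < ccrStar ψ A η + ε

/-- The `γ`-robust 0-1 loss `φ_γ(α) = 1{α ≤ γ}` (the 0-1 loss is the case `γ = 0`). -/
noncomputable def robustLoss (γ : ℝ) (α : ℝ) : ℝ := if α ≤ γ then 1 else 0

/-- Quasiconcavity of a real function on ℝ. -/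
def QuasiconcaveFn (h : ℝ → ℝ) : Prop :=
  ∀ α₁ α₂ l : ℝ, 0 ≤ l → l ≤ 1 → min (h α₁) (h α₂) ≤ h (l * α₁ + (1 - l) * α₂)

/-- `φ` is quasiconcave even if its even part `α ↦ φ(α) + φ(-α)` is quasiconcave. -/
def QuasiconcaveEven (φ : ℝ → ℝ) : Prop := QuasiconcaveFn (fun α => φ α + φ (-α))

theorem ccr_robustLoss_of_abs_le {γ α : ℝ} (h : |α| ≤ γ) (η : ℝ) :
    ccr (robustLoss γ) α η = 1 := by
  obtain ⟨h₁, h₂⟩ := abs_le.mp h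
  simp only [ccr, robustLoss, if_pos h₂, if_pos (neg_le.mp h₁)]
  ring

theorem ccr_robustLoss_of_lt {γ α : ℝ} (hγ : 0 < γ) (h : γ < α) (η : ℝ) :
    ccr (robustLoss γ) α η = 1 - η := by
  have h' : -α ≤ γ := by linarith
  simp [ccr, robustLoss, h.not_ge, h']

theorem ccr_robustLoss_of_lt_neg {γ α : ℝ} (hγ : 0 < γ) (h : α < -γ) (η : ℝ) :
    ccr (robustLoss γ) α η = η := by
  have h₁ : α ≤ γ := by linarith
  have h₂ : ¬ -α ≤ γ := by linarith
  simp [ccr, robustLoss, h₁, h₂]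

theorem abs_le_or_lt_or_lt_neg (γ α : ℝ) : |α| ≤ γ ∨ γ < α ∨ α < -γ := by
  rw [← lt_neg (a := γ), ← lt_abs]
  exact le_or_gt _ _

theorem ccrStar_robustLoss {γ : ℝ} (hγ : γ ∈ Set.Ioo (0 : ℝ) 1) {A : Set ℝ}
    (hA : Set.Icc (-1 : ℝ) 1 ⊆ A) {η : ℝ} (hη : η ∈ Set.Icc (0 : ℝ) 1) :
    ccrStar (robustLoss γ) A η = min η (1 - η) := by
  refine IsLeast.csInf_eq ⟨?_, ?_⟩
  · rcases min_choice η (1 - η) with h | h <;> rw [h]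
    · exact ⟨-1, hA (by simp), ccr_robustLoss_of_lt_neg hγ.1 (neg_lt_neg hγ.2) η⟩
    · exact ⟨1, hA (by simp), ccr_robustLoss_of_lt hγ.1 hγ.2 η⟩
  · rintro _ ⟨α, -, rfl⟩
    dsimp only
    rcases abs_le_or_lt_or_lt_neg γ α with h | h | h
    · rw [ccr_robustLoss_of_abs_le h]
      exact (min_le_left _ _).trans hη.2
    · rw [ccr_robustLoss_of_lt hγ.1 h]
      exact min_le_right _ _
    · rw [ccr_robustLoss_of_lt_neg hγ.1 h]
      exact min_le_left _ _

/-- Lemma 1 (constraint-set identification in the `(φ_γ, A)`-calibration function). -/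
theorem calibration_constraint_set
    (γ : ℝ) (hγ : γ ∈ Set.Ioo (0:ℝ) 1)
    (φ : ℝ → ℝ) (hφ : ∀ α, 0 ≤ φ α)
    (A : Set ℝ) (hA : Set.Icc (-1:ℝ) 1 ⊆ A)
    (η : ℝ) (hη : η ∈ Set.Icc (0:ℝ) 1) (ε : ℝ) (hε : 0 < ε) :
    (ε > max η (1 - η) →
      {α ∈ A | ccrExcess (robustLoss γ) A α η ≥ ε} = ∅) ∧
    (|2 * η - 1| < ε → ε ≤ max η (1 - η) →
      {α ∈ A | ccrExcess (robustLoss γ) A α η ≥ ε} = {α ∈ A | |α| ≤ γ} ∧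
      sInf ((fun α => ccrExcess φ A α η) ''
          {α ∈ A | ccrExcess (robustLoss γ) A α η ≥ ε})
        = sInf ((fun α => ccrExcess φ A α η) '' {α ∈ A | |α| ≤ γ})) ∧
    (ε ≤ |2 * η - 1| →
      {α ∈ A | ccrExcess (robustLoss γ) A α η ≥ ε}
        = {α ∈ A | (2 * η - 1) * α ≤ 0 ∨ |α| ≤ γ} ∧
      sInf ((fun α => ccrExcess φ A α η) ''
          {α ∈ A | ccrExcess (robustLoss γ) A α η ≥ ε})
        = sInf ((fun α => ccrExcess φ A α η) ''
            {α ∈ A | (2 * η - 1) * α ≤ 0 ∨ |α| ≤ γ})) := by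
  obtain ⟨hη₀, hη₁⟩ := hη
  have hγ₀ := hγ.1
  have hstar := ccrStar_robustLoss hγ hA ⟨hη₀, hη₁⟩
  refine ⟨fun h => ?_, fun h₁ h₂ => ?_, fun h => ?_⟩
  · refine Set.eq_empty_of_forall_notMem ?_
    rintro α ⟨-, hα⟩
    rw [ccrExcess, hstar] at hα
    rcases abs_le_or_lt_or_lt_neg γ α with hc | hc | hc
    · rw [ccr_robustLoss_of_abs_le hc] at hα
      grind
    · rw [ccr_robustLoss_of_lt hγ₀ hc] at hα
      grind
    · rw [ccr_robustLoss_of_lt_neg hγ₀ hc] at hα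
      grind
  · have hS : {α ∈ A | ccrExcess (robustLoss γ) A α η ≥ ε} = {α ∈ A | |α| ≤ γ} := by
      ext α
      refine and_congr_right fun _ => ?_
      rw [ccrExcess, hstar]
      rcases abs_le_or_lt_or_lt_neg γ α with hc | hc | hc
      · rw [ccr_robustLoss_of_abs_le hc]
        grind
      · rw [ccr_robustLoss_of_lt hγ₀ hc]
        grind
      · rw [ccr_robustLoss_of_lt_neg hγ₀ hc]
        grind
    exact ⟨hS, by rw [hS]⟩
  · have hS : {α ∈ A | ccrExcess (robustLoss γ) A α η ≥ ε}
        = {α ∈ A | (2 * η - 1) * α ≤ 0 ∨ |α| ≤ γ} := by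
      ext α
      refine and_congr_right fun _ => ?_
      rw [ccrExcess, hstar]
      rcases abs_le_or_lt_or_lt_neg γ α with hc | hc | hc
      · rw [ccr_robustLoss_of_abs_le hc]
        grind
      · have hα : 0 < α := hγ₀.trans hc
        have hsign : (2 * η - 1) * α ≤ 0 ↔ 2 * η - 1 ≤ 0 :=
          ⟨fun h => by by_contra! h'; exact (mul_pos h' hα).not_ge h,
            fun h => mul_nonpos_of_nonpos_of_nonneg h hα.le⟩
        rw [ccr_robustLoss_of_lt hγ₀ hc, hsign]
        grind
      · have hα : α < 0 := by linarith
        have hsign : (2 * η - 1) * α ≤ 0 ↔ 0 ≤ 2 * η - 1 :=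
          ⟨fun h => nonneg_of_mul_nonpos_left h hα,
            fun h => mul_nonpos_of_nonneg_of_nonpos h hα.le⟩
        rw [ccr_robustLoss_of_lt_neg hγ₀ hc, hsign]
        grind
    exact ⟨hS, by rw [hS]⟩
end

section
/- Let γ ∈ (0, 1) and let A ⊆ ℝ satisfy [−1, 1] ⊆ A. If φ : ℝ → ℝ is a convex margin-based loss with φ(α) ≥ 0 for all α, then φ is not (φ_γ, A)-calibrated. -/
/-- At `η = 1/2`, the prediction `0` minimizes the class-conditional risk of a convex loss. -/
lemma ccr_zero_half_le {φ : ℝ → ℝ} (hconv : ConvexOn ℝ Set.univ φ) (α : ℝ) :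
    ccr φ 0 (1 / 2) ≤ ccr φ α (1 / 2) := by
  have h := hconv.2 (Set.mem_univ α) (Set.mem_univ (-α))
    (show (0 : ℝ) ≤ 1 / 2 by norm_num) (show (0 : ℝ) ≤ 1 / 2 by norm_num) (by norm_num)
  simp only [smul_eq_mul, mul_neg, add_neg_cancel] at h
  simp only [ccr, neg_zero]
  linarith

lemma ccrStar_le {φ : ℝ → ℝ} (hφ : ∀ α, 0 ≤ φ α) {A : Set ℝ} {α η : ℝ} (hα : α ∈ A)
    (hη : η ∈ Set.Icc (0 : ℝ) 1) : ccrStar φ A η ≤ ccr φ α η := by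
  refine csInf_le ⟨0, ?_⟩ (Set.mem_image_of_mem _ hα)
  rintro _ ⟨β, -, rfl⟩
  exact add_nonneg (mul_nonneg hη.1 (hφ _)) (mul_nonneg (sub_nonneg.2 hη.2) (hφ _))

lemma robustLoss_nonneg (γ α : ℝ) : 0 ≤ robustLoss γ α := by
  unfold robustLoss
  split_ifs <;> norm_num

/-- Theorem 1: no convex margin-based surrogate loss is `(φ_γ, A)`-calibrated
when `[-1, 1] ⊆ A`. -/
theorem no_convex_calibrated_surrogate
    (γ : ℝ) (hγ : γ ∈ Set.Ioo (0:ℝ) 1)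
    (A : Set ℝ) (hA : Set.Icc (-1:ℝ) 1 ⊆ A)
    (φ : ℝ → ℝ) (hφ : ∀ α, 0 ≤ φ α) (hconv : ConvexOn ℝ Set.univ φ) :
    ¬ Calibrated φ (robustLoss γ) A := by
  intro hcal
  obtain ⟨δ, hδ, h⟩ := hcal (1 / 2) (by norm_num)
  have hhalf : (1 / 2 : ℝ) ∈ Set.Icc (0 : ℝ) 1 := by constructor <;> norm_num
  have h0 : (0 : ℝ) ∈ A := hA (by constructor <;> norm_num)
  have h1 : (1 : ℝ) ∈ A := hA (by constructor <;> norm_num)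
  have hmin : ccr φ 0 (1 / 2) ≤ ccrStar φ A (1 / 2) := by
    refine le_csInf ⟨_, Set.mem_image_of_mem _ h0⟩ ?_
    rintro _ ⟨α, -, rfl⟩
    exact ccr_zero_half_le hconv α
  have hlt := h (1 / 2) hhalf 0 h0 (by linarith)
  have hle := ccrStar_le (robustLoss_nonneg γ) h1 hhalf
  have e0 : robustLoss γ 0 = 1 := if_pos hγ.1.le
  have e1 : robustLoss γ 1 = 0 := if_neg (not_le.2 hγ.2)
  have e2 : robustLoss γ (-1) = 1 := if_pos (by linarith [hγ.1])
  simp only [ccr, neg_zero, e0, e1, e2] at hlt hle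
  linarith
end

section
/- Let φ : ℝ → ℝ be a margin-based loss with φ(α) ≥ 0 for all α. If φ is nonincreasing, bounded, not identically 0, and quasiconcave even, then for every η with 1/2 < η ≤ 1 the function α ↦ C_φ(α, η) is nonincreasing on [0, ∞), i.e., 0 ≤ α₁ ≤ α₂ implies C_φ(α₁, η) ≥ C_φ(α₂, η). -/
/-- The even part of a quasiconcave even function is nonincreasing on `[0, ∞)`. -/
theorem QuasiconcaveEven.le_of_nonneg_of_le {φ : ℝ → ℝ} (hφ : QuasiconcaveEven φ)
    {a b : ℝ} (ha : 0 ≤ a) (hab : a ≤ b) : φ b + φ (-b) ≤ φ a + φ (-a) := by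
  rcases (ha.trans hab).eq_or_lt with hb | hb
  · obtain rfl : a = b := by linarith
    exact le_rfl
  · have h := hφ b (-b) ((a + b) / (2 * b)) (by positivity)
      ((div_le_one (by positivity)).2 (by linarith))
    have hcomb : (a + b) / (2 * b) * b + (1 - (a + b) / (2 * b)) * -b = a := by
      field_simp
      ring
    rw [hcomb] at h
    simpa [add_comm (φ (-b))] using h

/-- Lemma: if `φ` is nonincreasing, bounded, not identically `0`, and quasiconcave
even, then for every `η ∈ (1/2, 1]`, `α ↦ C_φ(α, η)` is nonincreasing on `[0, ∞)`. -/
theorem ccr_antitone_on_nonneg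
    (φ : ℝ → ℝ) (hφ : ∀ α, 0 ≤ φ α)
    (hmono : ∀ α₁ α₂ : ℝ, α₁ ≤ α₂ → φ α₂ ≤ φ α₁)
    (hbdd : ∃ M : ℝ, ∀ α, φ α ≤ M)
    (hne : ¬ (∀ α, φ α = 0))
    (hqcc : QuasiconcaveEven φ)
    (η : ℝ) (hη1 : 1/2 < η) (hη2 : η ≤ 1) :
    ∀ α₁ α₂ : ℝ, 0 ≤ α₁ → α₁ ≤ α₂ → ccr φ α₂ η ≤ ccr φ α₁ η := by
  intro α₁ α₂ h0 h12
  have heven := hqcc.le_of_nonneg_of_le h0 h12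
  have hφ12 := hmono α₁ α₂ h12
  unfold ccr
  nlinarith [mul_le_mul_of_nonneg_left heven (sub_nonneg.2 hη2),
    mul_le_mul_of_nonneg_left hφ12 (by linarith : 0 ≤ 2 * η - 1)]
end

section
/- For every β ≥ 0, the function α ↦ 1/(1 + exp(α − β)) + 1/(1 + exp(−α − β)) is quasiconcave on ℝ. In other words, the shifted sigmoid loss φ_β(α) := 1/(1 + exp(α − β)) is quasiconcave even for every β ≥ 0. -/
/-- The even part of the shifted sigmoid loss depends on `α` only through `cosh α`. -/
lemma sigmoid_add_sigmoid_neg (α β : ℝ) :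
    1 / (1 + Real.exp (α - β)) + 1 / (1 + Real.exp (-α - β)) =
      1 + (1 - Real.exp (-β) ^ 2) /
        (1 + Real.exp (-β) ^ 2 + 2 * Real.exp (-β) * Real.cosh α) := by
  have hα : Real.exp α * Real.exp (-α) = 1 := by simp [← Real.exp_add]
  have hpos := Real.exp_pos α
  have hneg := Real.exp_pos (-α)
  have hb := Real.exp_pos (-β)
  rw [Real.cosh_eq, sub_eq_add_neg α β, sub_eq_add_neg (-α) β, Real.exp_add, Real.exp_add]
  generalize Real.exp α = x at *
  generalize Real.exp (-α) = y at *
  generalize Real.exp (-β) = b at *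
  have hden : 1 + b ^ 2 + 2 * b * ((x + y) / 2) = (1 + x * b) * (1 + y * b) := by
    linear_combination -b ^ 2 * hα
  rw [hden]
  field_simp
  linear_combination -b ^ 2 * hα

/-- For `β ≥ 0`, the even part of the shifted sigmoid loss is antitone in `|α|`. -/
lemma sigmoid_add_sigmoid_neg_le_of_abs_le {β : ℝ} (hβ : 0 ≤ β) {x y : ℝ} (h : |x| ≤ |y|) :
    1 / (1 + Real.exp (y - β)) + 1 / (1 + Real.exp (-y - β)) ≤
      1 / (1 + Real.exp (x - β)) + 1 / (1 + Real.exp (-x - β)) := by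
  rw [sigmoid_add_sigmoid_neg, sigmoid_add_sigmoid_neg]
  have hb : Real.exp (-β) ≤ 1 := Real.exp_le_one_iff.2 (neg_nonpos.2 hβ)
  have hnum : 0 ≤ 1 - Real.exp (-β) ^ 2 :=
    sub_nonneg.2 (pow_le_one₀ (Real.exp_pos _).le hb)
  have hcosh : Real.cosh x ≤ Real.cosh y := Real.cosh_le_cosh.2 h
  have hx := Real.cosh_pos x
  gcongr

/-- The shifted sigmoid loss is quasiconcave even for every shift `β ≥ 0`. -/
theorem sigmoid_quasiconcave_even (β : ℝ) (hβ : 0 ≤ β) :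
    QuasiconcaveEven (fun α => 1 / (1 + Real.exp (α - β))) := by
  intro x y l hl hl'
  have habs : |l * x + (1 - l) * y| ≤ max |x| |y| := by
    simpa using (convexOn_norm (convex_univ (𝕜 := ℝ) (E := ℝ))).le_max_of_mem_segment
      (Set.mem_univ x) (Set.mem_univ y)
      ⟨l, 1 - l, hl, sub_nonneg.2 hl', by ring, by simp⟩
  rcases le_max_iff.1 habs with h | h
  · exact (min_le_left _ _).trans (sigmoid_add_sigmoid_neg_le_of_abs_le hβ h)
  · exact (min_le_right _ _).trans (sigmoid_add_sigmoid_neg_le_of_abs_le hβ h)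
end

section
/- Let γ ∈ (0, 1) and β ≥ 0. Define the modified squared loss φ(α) := 1 for α ≤ 0, φ(α) := (1 − α)² for 0 < α ≤ 1, and φ(α) := 0 for α > 1, and its shift φ_β(α) := φ(α − β). Then φ_β is (φ_γ, [−1, 1])-calibrated if and only if β < 1. -/
/-- The modified squared loss: `1` for `α ≤ 0`, `(1-α)²` for `0 < α ≤ 1`, `0` for `α > 1`. -/
noncomputable def modSq (α : ℝ) : ℝ := if α ≤ 0 then 1 else if α ≤ 1 then (1 - α)^2 else 0

theorem modSq_antitone : Antitone modSq := by
  intro x y hxy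
  unfold modSq
  split_ifs <;> nlinarith

theorem modSq_of_nonpos {x : ℝ} (hx : x ≤ 0) : modSq x = 1 := if_pos hx

theorem modSq_nonneg (x : ℝ) : 0 ≤ modSq x := by
  unfold modSq
  split_ifs <;> positivity

theorem modSq_le_one (x : ℝ) : modSq x ≤ 1 := by
  unfold modSq
  split_ifs <;> nlinarith

theorem modSq_one_sub {β : ℝ} (h0 : 0 ≤ β) (h1 : β < 1) : modSq (1 - β) = β ^ 2 := by
  unfold modSq
  rw [if_neg (by linarith), if_pos (by linarith)]
  ring

theorem sq_lt_modSq_sub {γ β : ℝ} (hγ : γ < 1) (h0 : 0 ≤ β) (h1 : β < 1) :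
    β ^ 2 < modSq (γ - β) := by
  unfold modSq
  split_ifs <;> nlinarith

theorem ccrStar_le_ccr {φ : ℝ → ℝ} {A : Set ℝ} {η α : ℝ} (hφ : ∀ x, 0 ≤ φ x)
    (hη : η ∈ Set.Icc (0:ℝ) 1) (hα : α ∈ A) : ccrStar φ A η ≤ ccr φ α η := by
  refine csInf_le ⟨0, ?_⟩ ⟨α, hα, rfl⟩
  rintro _ ⟨x, -, rfl⟩
  exact add_nonneg (mul_nonneg hη.1 (hφ x)) (mul_nonneg (sub_nonneg.2 hη.2) (hφ (-x)))

theorem min_le_ccrStar_robustLoss {γ η : ℝ} {A : Set ℝ} (hγ : 0 ≤ γ) (hA : A.Nonempty)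
    (hη : η ∈ Set.Icc (0:ℝ) 1) : min η (1 - η) ≤ ccrStar (robustLoss γ) A η := by
  refine le_csInf (hA.image _) ?_
  rintro _ ⟨x, -, rfl⟩
  obtain ⟨h0, h1⟩ := hη
  simp only [ccr, robustLoss]
  rw [min_le_iff]
  split_ifs
  · left; linarith
  · left; linarith
  · right; linarith
  · linarith

theorem calibrated_modSq_sub {γ β : ℝ} (hγ : γ ∈ Set.Ioo (0:ℝ) 1) (hβ : 0 ≤ β) (hβ1 : β < 1) :
    Calibrated (fun α => modSq (α - β)) (robustLoss γ) (Set.Icc (-1:ℝ) 1) := by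
  intro ε hε
  obtain ⟨hγ0, hγ1⟩ := hγ
  have hc := sq_lt_modSq_sub hγ1 hβ hβ1
  have hb : β ^ 2 < 1 := by nlinarith
  refine ⟨min ((modSq (γ - β) - β ^ 2) / 2) (ε * (1 - β ^ 2)),
    lt_min (by linarith) (mul_pos hε (by linarith)), ?_⟩
  intro η hη α hα hlt
  have hpos := ccrStar_le_ccr (φ := fun α => modSq (α - β)) (A := Set.Icc (-1:ℝ) 1) (α := 1)
    (fun x => modSq_nonneg _) hη (by simp)
  have hneg := ccrStar_le_ccr (φ := fun α => modSq (α - β)) (A := Set.Icc (-1:ℝ) 1) (α := -1)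
    (fun x => modSq_nonneg _) hη (by simp)
  have hψ := min_le_ccrStar_robustLoss (A := Set.Icc (-1:ℝ) 1) hγ0.le ⟨0, by simp⟩ hη
  have hδ₁ := min_le_left ((modSq (γ - β) - β ^ 2) / 2) (ε * (1 - β ^ 2))
  have hδ₂ := min_le_right ((modSq (γ - β) - β ^ 2) / 2) (ε * (1 - β ^ 2))
  obtain ⟨h0, h1⟩ := hη
  obtain ⟨hα0, hα1⟩ := hα
  simp only [ccr, neg_neg, modSq_one_sub hβ hβ1,
    modSq_of_nonpos (show -1 - β ≤ 0 by linarith)] at hpos hneg hlt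
  generalize min ((modSq (γ - β) - β ^ 2) / 2) (ε * (1 - β ^ 2)) = δ at hlt hδ₁ hδ₂
  generalize ccrStar (fun α => modSq (α - β)) (Set.Icc (-1:ℝ) 1) η = S at hlt hpos hneg
  have hp : β ^ 2 ≤ modSq (α - β) :=
    modSq_one_sub hβ hβ1 ▸ modSq_antitone (by linarith)
  have hq : β ^ 2 ≤ modSq (-α - β) :=
    modSq_one_sub hβ hβ1 ▸ modSq_antitone (by linarith)
  have hpγ : α ≤ γ → modSq (γ - β) ≤ modSq (α - β) := fun h => modSq_antitone (by linarith)
  have hqγ : -α ≤ γ → modSq (γ - β) ≤ modSq (-α - β) := fun h => modSq_antitone (by linarith)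
  have hp1 : α ≤ 0 → modSq (α - β) = 1 := fun h => modSq_of_nonpos (by linarith)
  have hq1 : 0 ≤ α → modSq (-α - β) = 1 := fun h => modSq_of_nonpos (by linarith)
  have hc1 : modSq (γ - β) ≤ 1 := modSq_le_one _
  generalize modSq (α - β) = p at *
  generalize modSq (-α - β) = q at *
  generalize modSq (γ - β) = c at *
  generalize β ^ 2 = b at *
  simp only [ccr, robustLoss]
  by_cases hαγ : α ≤ γ
  · by_cases hαγ' : -α ≤ γ
    · exfalso
      specialize hpγ hαγ
      specialize hqγ hαγ'
      rcases le_total α 0 with h' | h' <;> rcases le_total η (1 / 2) with h2 | h2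
      · rw [hp1 h'] at *; nlinarith
      · rw [hp1 h'] at *; nlinarith
      · rw [hq1 h'] at *; nlinarith
      · rw [hq1 h'] at *; nlinarith
    · rw [if_pos hαγ, if_neg hαγ']
      rw [hp1 (by linarith)] at hlt
      have : (2 * η - 1) < ε := by
        by_contra! h
        nlinarith
      rcases min_le_iff.1 hψ with h | h <;> linarith
  · rw [if_neg hαγ, if_pos (by linarith)]
    rw [hq1 (by linarith)] at hlt
    have : (1 - 2 * η) < ε := by
      by_contra! h
      nlinarith
    rcases min_le_iff.1 hψ with h | h <;> linarith

theorem not_calibrated_modSq_sub {γ β : ℝ} (hγ : γ ∈ Set.Ioo (0:ℝ) 1) (hβ : 1 ≤ β) :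
    ¬ Calibrated (fun α => modSq (α - β)) (robustLoss γ) (Set.Icc (-1:ℝ) 1) := by
  intro h
  obtain ⟨hγ0, hγ1⟩ := hγ
  obtain ⟨δ, hδ, H⟩ := h 1 one_pos
  have hφ : (1:ℝ) ≤ ccrStar (fun α => modSq (α - β)) (Set.Icc (-1:ℝ) 1) 1 := by
    refine le_csInf ⟨_, 0, by simp, rfl⟩ ?_
    rintro _ ⟨x, hx, rfl⟩
    simp [ccr, modSq_of_nonpos (show x - β ≤ 0 by linarith [hx.2])]
  have hψ : ccrStar (robustLoss γ) (Set.Icc (-1:ℝ) 1) 1 ≤ ccr (robustLoss γ) 1 1 :=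
    ccrStar_le_ccr (fun x => by unfold robustLoss; split_ifs <;> norm_num) (by simp) (by simp)
  have := H 1 (by simp) (-1) (by simp)
  simp only [ccr, robustLoss, modSq_of_nonpos (show -1 - β ≤ 0 by linarith),
    if_pos (show -1 ≤ γ by linarith), if_neg (show ¬ 1 ≤ γ by linarith)] at this hψ
  have := this (by linarith)
  linarith

/-- The shifted modified squared loss is `(φ_γ, [-1,1])`-calibrated iff `β < 1`
(for shifts `β ≥ 0`). -/
theorem modSq_calibrated_iff
    (γ : ℝ) (hγ : γ ∈ Set.Ioo (0:ℝ) 1) (β : ℝ) (hβ : 0 ≤ β) :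
    Calibrated (fun α => modSq (α - β)) (robustLoss γ) (Set.Icc (-1:ℝ) 1) ↔ β < 1 := by
  refine ⟨fun h => ?_, calibrated_modSq_sub hγ hβ⟩
  by_contra! hβ1
  exact not_calibrated_modSq_sub hγ hβ1 h
end
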